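/- arXiv:2106.15773 — 4 statements merged into one kernel-verified Lean document; each statement's English description precedes it below -/
import Mathlib

section
/- Let p_ave > 0 and let p_tot : ℕ → Ω → ℝ be a sequence of nonnegative integrable random variables on a probability space Ω. Define the virtual power queue Q : ℕ → Ω → ℝ by Q(0) = 0 and Q(t+1) = max(Q(t) − p_ave, 0) + p_tot(t) pointwise. If Q is mean rate stable, i.e., lim_{t→∞} (1/t)·E[|Q(t)|] = 0, then limsup_{T→∞} (1/T)·∑_{t=0}^{T−1} E[p_tot(t)] ≤ p_ave. -/
open MeasureTheory Filter

/-!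
A queue loses at most its service in each slot, so `Q t - S t + A t ≤ Q (t + 1)`. Taking
expectations and telescoping bounds the total expected arrivals up to time `T` by the total
expected service plus `E[Q T] - E[Q 0]`. Mean rate stability makes this difference `o(T)`, so the
arrival rate is at most the service rate. The power constraint is the case of constant service.
-/

/-- The process `Q` is the backlog of a queue with service `S` and arrivals `A`; the virtual power
queue has `S = p_ave` and `A = p_tot`. The initial backlog `Q 0` is left free. -/
def IsBacklog {Ω : Type*} (S A Q : ℕ → Ω → ℝ) : Prop :=
  ∀ t ω, Q (t + 1) ω = max (Q t ω - S t ω) 0 + A t ω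

theorem IsBacklog.drift_le {Ω : Type*} {S A Q : ℕ → Ω → ℝ} (hQ : IsBacklog S A Q) (t : ℕ) :
    Q t - S t + A t ≤ Q (t + 1) := by
  intro ω
  rw [hQ t ω]
  exact add_le_add_left (le_max_left _ _) _

/-- Mean rate stability of a discrete-time process: `E[|Q t|]` grows sublinearly in `t`.
The expectation is a Bochner integral, so the notion is only meaningful when every `Q t` is
integrable. -/
def MeanRateStable {Ω : Type*} [MeasurableSpace Ω] (μ : Measure Ω) (Q : ℕ → Ω → ℝ) : Prop :=
  Tendsto (fun t : ℕ => (1 / (t : ℝ)) * ∫ ω, |Q t ω| ∂μ) atTop (nhds 0)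

theorem sum_range_le_of_drift_le {G : Type*} [AddCommGroup G] [PartialOrder G]
    [IsOrderedAddMonoid G] {s a q : ℕ → G} (hdrift : ∀ t, q t - s t + a t ≤ q (t + 1)) (T : ℕ) :
    ∑ t ∈ Finset.range T, a t ≤ q T - q 0 + ∑ t ∈ Finset.range T, s t := by
  calc ∑ t ∈ Finset.range T, a t
      ≤ ∑ t ∈ Finset.range T, (q (t + 1) - q t + s t) := by
        refine Finset.sum_le_sum fun t _ => ?_
        calc a t = q t - s t + a t - q t + s t := by abel
          _ ≤ q (t + 1) - q t + s t := by gcongr; exact hdrift t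
    _ = q T - q 0 + ∑ t ∈ Finset.range T, s t := by
        rw [Finset.sum_add_distrib, Finset.sum_range_sub]

theorem limsup_average_le_of_drift_le {s a q : ℕ → ℝ} {c : ℝ} (ha : ∀ t, 0 ≤ a t)
    (hdrift : ∀ t, q t - s t + a t ≤ q (t + 1))
    (hq : Tendsto (fun T : ℕ => (1 / (T : ℝ)) * q T) atTop (nhds 0))
    (hs : Tendsto (fun T : ℕ => (1 / (T : ℝ)) * ∑ t ∈ Finset.range T, s t) atTop (nhds c)) :
    limsup (fun T : ℕ => (1 / (T : ℝ)) * ∑ t ∈ Finset.range T, a t) atTop ≤ c := by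
  have hbound (T : ℕ) : (1 / (T : ℝ)) * ∑ t ∈ Finset.range T, a t ≤
      (1 / (T : ℝ)) * q T - (1 / (T : ℝ)) * q 0 + (1 / (T : ℝ)) * ∑ t ∈ Finset.range T, s t := by
    rw [← mul_sub, ← mul_add]
    gcongr
    exact sum_range_le_of_drift_le hdrift T
  have hlim : Tendsto (fun T : ℕ => (1 / (T : ℝ)) * q T - (1 / (T : ℝ)) * q 0 +
      (1 / (T : ℝ)) * ∑ t ∈ Finset.range T, s t) atTop (nhds c) := by
    simpa using (hq.sub (tendsto_one_div_atTop_nhds_zero_nat.mul_const (q 0))).add hs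
  -- In `ℝ` the `limsup` of averages tending to `-∞` would be a junk value.
  have hcobdd : IsCoboundedUnder (· ≤ ·) atTop
      (fun T : ℕ => (1 / (T : ℝ)) * ∑ t ∈ Finset.range T, a t) :=
    (isBoundedUnder_of ⟨0, fun T => mul_nonneg (by positivity)
      (Finset.sum_nonneg fun t _ => ha t)⟩).isCoboundedUnder_le
  exact (limsup_le_limsup (.of_forall hbound) hcobdd hlim.isBoundedUnder_le).trans_eq
    hlim.limsup_eq

section Stochastic

variable {Ω : Type*} [MeasurableSpace Ω] {μ : Measure Ω} {S A Q : ℕ → Ω → ℝ}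

theorem MeanRateStable.tendsto_average_integral (hQ : MeanRateStable μ Q) :
    Tendsto (fun t : ℕ => (1 / (t : ℝ)) * ∫ ω, Q t ω ∂μ) atTop (nhds 0) := by
  refine squeeze_zero_norm (fun t => ?_) hQ
  rw [norm_mul, Real.norm_of_nonneg (by positivity)]
  gcongr
  exact norm_integral_le_integral_norm (Q t)

theorem integral_drift_le {s a q q' : Ω → ℝ} (hs : Integrable s μ) (ha : Integrable a μ)
    (hq : Integrable q μ) (hq' : Integrable q' μ) (hdrift : q - s + a ≤ᵐ[μ] q') :
    ∫ ω, q ω ∂μ - ∫ ω, s ω ∂μ + ∫ ω, a ω ∂μ ≤ ∫ ω, q' ω ∂μ := by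
  rw [← integral_sub' hq hs, ← integral_add' (hq.sub hs) ha]
  exact integral_mono_ae ((hq.sub hs).add ha) hq' hdrift

theorem IsBacklog.integrable (hQ : IsBacklog S A Q) (hQ0 : Integrable (Q 0) μ)
    (hS : ∀ t, Integrable (S t) μ) (hA : ∀ t, Integrable (A t) μ) (t : ℕ) :
    Integrable (Q t) μ := by
  induction t with
  | zero => exact hQ0
  | succ t ih =>
    rw [funext (hQ t)]
    exact (ih.sub (hS t)).pos_part.add (hA t)

theorem mean_rate_stable_implies_avg_power_constraint_general {c : ℝ}
    (hS : ∀ t, Integrable (S t) μ) (hA : ∀ t, Integrable (A t) μ) (hQ : ∀ t, Integrable (Q t) μ)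
    (hA_nonneg : ∀ t, 0 ≤ ∫ ω, A t ω ∂μ)
    (hdrift : ∀ t, Q t - S t + A t ≤ᵐ[μ] Q (t + 1))
    (hstable : MeanRateStable μ Q)
    (hrate : Tendsto (fun T : ℕ => (1 / (T : ℝ)) * ∑ t ∈ Finset.range T, ∫ ω, S t ω ∂μ)
      atTop (nhds c)) :
    limsup (fun T : ℕ => (1 / (T : ℝ)) * ∑ t ∈ Finset.range T, ∫ ω, A t ω ∂μ) atTop ≤ c :=
  limsup_average_le_of_drift_le hA_nonneg
    (fun t => integral_drift_le (hS t) (hA t) (hQ t) (hQ (t + 1)) (hdrift t))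
    hstable.tendsto_average_integral hrate

end Stochastic

/-- Lemma 1: if the virtual power queue `Q` (driven by total power `p_tot`
and budget `p_ave`) is mean rate stable, then the time-average expected
total power consumption is at most `p_ave`. -/
theorem mean_rate_stable_implies_avg_power_constraint
    {Ω : Type*} [MeasurableSpace Ω] (μ : Measure Ω) [IsProbabilityMeasure μ]
    (p_ave : ℝ) (hp_ave : 0 < p_ave)
    (p_tot : ℕ → Ω → ℝ)
    (hp_nonneg : ∀ t ω, 0 ≤ p_tot t ω)
    (hp_int : ∀ t, Integrable (p_tot t) μ)
    (Q : ℕ → Ω → ℝ)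
    (hQ0 : ∀ ω, Q 0 ω = 0)
    (hQrec : ∀ t ω, Q (t + 1) ω = max (Q t ω - p_ave) 0 + p_tot t ω)
    (hmrs : Tendsto (fun t : ℕ => (1 / (t : ℝ)) * ∫ ω, |Q t ω| ∂μ) atTop (nhds 0)) :
    limsup (fun T : ℕ =>
      (1 / (T : ℝ)) * ∑ t ∈ Finset.range T, ∫ ω, p_tot t ω ∂μ) atTop ≤ p_ave := by
  have hbacklog : IsBacklog (fun _ _ => p_ave) p_tot Q := hQrec
  have hservice (_ : ℕ) : Integrable (fun _ : Ω => p_ave) μ := integrable_const p_ave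
  have hQ0_int : Integrable (Q 0) μ := funext hQ0 ▸ integrable_zero Ω ℝ μ
  have hrate : Tendsto (fun T : ℕ => (1 / (T : ℝ)) * ∑ _ ∈ Finset.range T, ∫ _ : Ω, p_ave ∂μ)
      atTop (nhds p_ave) := by
    simpa using (tendsto_const_nhds (x := p_ave) (f := atTop)).cesaro
  exact mean_rate_stable_implies_avg_power_constraint_general hservice hp_int
    (hbacklog.integrable hQ0_int hservice hp_int) (fun t => integral_nonneg (hp_nonneg t))
    (fun t => .of_forall (hbacklog.drift_le t)) hmrs hrate
end

section
/- Let M ≥ 1, let g_1, …, g_M > 0 be reals, and let R_1, …, R_M ≥ 0 be reals. Define powers p_1, …, p_M by the backward SIC recursion p_m = (2^{R_m} − 1)·(∑_{i=m+1}^M p_i + 1/g_m) for m = M, M−1, …, 1 (the empty sum being 0). Then, setting ν_m = ∑_{i=1}^m R_i and with the convention 1/g_{M+1} := 0, the total power satisfies ∑_{m=1}^M p_m = ∑_{m=1}^M (1/g_m − 1/g_{m+1})·2^{ν_m} − 1/g_1. -/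
/-!
Let `S m = ∑ i ∈ Icc m M, p i` be the power of the devices `m, …, M`. Adding `1 / g m` turns the
SIC recursion into the multiplicative relation `S m + 1 / g m = 2 ^ R m * (S (m + 1) + 1 / g m)`.
Hence replacing `2 ^ ν (m - 1) * (S m + 1 / g m)` by `2 ^ ν m * (S (m + 1) + 1 / g (m + 1))`
costs exactly `(1 / g m - 1 / g (m + 1)) * 2 ^ ν m`, and these costs telescope.
-/

open Finset

lemma sum_Icc_add_eq_mul {A : Type*} [Ring A] {m M : ℕ} (hm : m ≤ M) {p : ℕ → A} {a c : A}
    (hp : p m = (a - 1) * ((∑ i ∈ Icc (m + 1) M, p i) + c)) :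
    (∑ i ∈ Icc m M, p i) + c = a * ((∑ i ∈ Icc (m + 1) M, p i) + c) := by
  rw [← insert_Icc_add_one_left_eq_Icc hm, sum_insert (by simp), hp, add_assoc, sub_one_mul,
    sub_add_cancel]

lemma sum_Ico_sub_mul_prod_Icc {A : Type*} [CommRing A] {l n : ℕ} (hln : l ≤ n) {a c S : ℕ → A}
    (hS : ∀ m ∈ Ico l n, S m + c m = a m * (S (m + 1) + c m)) :
    ∑ m ∈ Ico l n, (c m - c (m + 1)) * ∏ i ∈ Icc l m, a i
      = S l + c l - (S n + c n) * ∏ i ∈ Ico l n, a i := by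
  induction n, hln using Nat.le_induction with
  | base => simp
  | succ n hln ih =>
    rw [sum_Ico_succ_top hln, ih fun m hm ↦ hS m (Ico_subset_Ico_right n.le_succ hm),
      hS n (mem_Ico.2 ⟨hln, n.lt_succ_self⟩), Ico_add_one_right_eq_Icc,
      ← prod_Ico_mul_eq_prod_Icc hln]
    ring

lemma sum_Icc_sub_ite_mul {A : Type*} [NonUnitalNonAssocRing A] {l M : ℕ} (hlM : l ≤ M)
    (c w : ℕ → A) :
    ∑ m ∈ Icc l M, (c m - if m = M then 0 else c (m + 1)) * w m
      = (∑ m ∈ Icc l M, (c m - c (m + 1)) * w m) + c (M + 1) * w M := by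
  have split_last (m : ℕ) : (c m - if m = M then 0 else c (m + 1)) * w m
      = (c m - c (m + 1)) * w m + if m = M then c (m + 1) * w m else 0 := by
    split_ifs <;> simp [sub_mul]
  simp [split_last, sum_add_distrib, hlM]

theorem noma_total_power_telescoping_general {A : Type*} [CommRing A] {M : ℕ} (hM : 1 ≤ M)
    {a c p : ℕ → A}
    (hp : ∀ m ∈ Icc 1 M, p m = (a m - 1) * ((∑ i ∈ Icc (m + 1) M, p i) + c m)) :
    ∑ m ∈ Icc 1 M, p m
      = (∑ m ∈ Icc 1 M, (c m - if m = M then 0 else c (m + 1)) * ∏ i ∈ Icc 1 m, a i) - c 1 := by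
  let S (m : ℕ) : A := ∑ i ∈ Icc m M, p i
  have S_add_eq_mul : ∀ m ∈ Ico 1 (M + 1), S m + c m = a m * (S (m + 1) + c m) := fun m hm ↦
    sum_Icc_add_eq_mul (Nat.lt_succ_iff.1 (mem_Ico.1 hm).2) (hp m (by simpa using hm))
  have S_last : S (M + 1) = 0 := by simp [S]
  have telescoped := sum_Ico_sub_mul_prod_Icc (Nat.le_add_left 1 M) S_add_eq_mul
  rw [Ico_add_one_right_eq_Icc, S_last, zero_add] at telescoped
  rw [sum_Icc_sub_ite_mul hM, telescoped]
  ring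

/-- Equation (62), Appendix C: telescoping identity for the total uplink NOMA
transmit power under the backward SIC power recursion, in the cumulative-rate
variables `ν_m = ∑_{i=1}^m R_i` (with the convention `1/g_{M+1} := 0`). -/
theorem noma_total_power_telescoping
    (M : ℕ) (hM : 1 ≤ M) (g R p : ℕ → ℝ)
    (hg : ∀ m ∈ Icc 1 M, 0 < g m)
    (hR : ∀ m ∈ Icc 1 M, 0 ≤ R m)
    (hp : ∀ m ∈ Icc 1 M,
      p m = ((2 : ℝ) ^ (R m) - 1) * ((∑ i ∈ Icc (m + 1) M, p i) + 1 / g m))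
    (ν : ℕ → ℝ) (hν : ∀ m, ν m = ∑ i ∈ Icc 1 m, R i) :
    ∑ m ∈ Icc 1 M, p m
      = (∑ m ∈ Icc 1 M,
          (1 / g m - if m = M then 0 else 1 / g (m + 1)) * (2 : ℝ) ^ (ν m))
        - 1 / g 1 := by
  simpa only [hν, Real.rpow_sum_of_pos two_pos] using
    noma_total_power_telescoping_general hM hp
end

section
/- Let V > 0, B ≥ 0, ε > 0 and U* ∈ ℝ be reals, let L : ℕ → ℝ satisfy L(t) ≥ 0 for all t, let U : ℕ → ℝ, and let Q : ℕ → ℝ satisfy Q(t) ≥ 0 for all t. Suppose that for every t ∈ ℕ, L(t+1) − L(t) − V·U(t) ≤ B − V·U* − ε·Q(t). Then for every T ≥ 1, (1/T)·∑_{t=0}^{T−1} Q(t) ≤ B/ε − (V/ε)·(U* − (1/T)·∑_{t=0}^{T−1} U(t)) + L(0)/(ε·T). -/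
open Finset

lemma sub_le_sum_range_of_drift_le
    {M : Type*} [AddCommGroup M] [PartialOrder M] [IsOrderedAddMonoid M]
    {L f : ℕ → M} {T : ℕ} (hdrift : ∀ t < T, L (t + 1) - L t ≤ f t) :
    L T - L 0 ≤ ∑ t ∈ range T, f t := by
  rw [← sum_range_sub L T]
  exact sum_le_sum fun t ht ↦ hdrift t (mem_range.mp ht)

lemma sub_sub_mul_sum_range_le_of_drift_plus_penalty_le
    {R : Type*} [Ring R] [PartialOrder R] [IsOrderedAddMonoid R]
    {V B ε Ustar : R} {L U Q : ℕ → R} {T : ℕ}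
    (hdrift : ∀ t < T, L (t + 1) - L t - V * U t ≤ B - V * Ustar - ε * Q t) :
    L T - L 0 - V * ∑ t ∈ range T, U t
      ≤ T * (B - V * Ustar) - ε * ∑ t ∈ range T, Q t := by
  have hstep : ∀ t < T, L (t + 1) - L t ≤ B - V * Ustar - ε * Q t + V * U t :=
    fun t ht ↦ sub_le_iff_le_add.mp (hdrift t ht)
  rw [sub_le_iff_le_add]
  calc
    L T - L 0 ≤ ∑ t ∈ range T, (B - V * Ustar - ε * Q t + V * U t) :=
      sub_le_sum_range_of_drift_le hstep
    _ = T * (B - V * Ustar) - ε * ∑ t ∈ range T, Q t + V * ∑ t ∈ range T, U t := by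
      simp only [sum_add_distrib, sum_sub_distrib, sum_const, card_range, nsmul_eq_mul, mul_sum,
        mul_sub]

theorem drift_plus_penalty_queue_bound_general
    {K : Type*} [Field K] [LinearOrder K] [IsStrictOrderedRing K]
    {V B ε Ustar : K} (hε : 0 < ε) {L U Q : ℕ → K} {T : ℕ} (hT : 1 ≤ T) (hLT : 0 ≤ L T)
    (hdrift : ∀ t < T, L (t + 1) - L t - V * U t ≤ B - V * Ustar - ε * Q t) :
    (1 / (T : K)) * ∑ t ∈ range T, Q t
      ≤ B / ε - (V / ε) * (Ustar - (1 / (T : K)) * ∑ t ∈ range T, U t)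
        + L 0 / (ε * T) := by
  have : (0 : K) < T := by exact_mod_cast hT
  have hbacklog : ε * ∑ t ∈ range T, Q t
      ≤ T * (B - V * Ustar) + V * ∑ t ∈ range T, U t + L 0 := by
    linarith [sub_sub_mul_sum_range_le_of_drift_plus_penalty_le hdrift]
  calc
    (1 / (T : K)) * ∑ t ∈ range T, Q t = (ε * ∑ t ∈ range T, Q t) / (ε * T) := by
      field_simp
    _ ≤ (T * (B - V * Ustar) + V * ∑ t ∈ range T, U t + L 0) / (ε * T) := by
      gcongr
    _ = B / ε - (V / ε) * (Ustar - (1 / (T : K)) * ∑ t ∈ range T, U t)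
        + L 0 / (ε * T) := by
      field_simp
      ring

/-- Theorem 2 (queue-length half): if the drift-plus-penalty bound with slack
`ε·Q(t)` holds at every slot, then the time-average total queue backlog is
bounded, exhibiting the `[O(1/V), O(V)]` utility–backlog tradeoff. -/
theorem drift_plus_penalty_queue_bound
    (V B ε Ustar : ℝ) (hV : 0 < V) (hB : 0 ≤ B) (hε : 0 < ε)
    (L : ℕ → ℝ) (hL : ∀ t, 0 ≤ L t) (U : ℕ → ℝ)
    (Q : ℕ → ℝ) (hQ : ∀ t, 0 ≤ Q t)
    (hdrift : ∀ t, L (t + 1) - L t - V * U t ≤ B - V * Ustar - ε * Q t) :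
    ∀ T : ℕ, 1 ≤ T →
      (1 / (T : ℝ)) * ∑ t ∈ range T, Q t
        ≤ B / ε - (V / ε) * (Ustar - (1 / (T : ℝ)) * ∑ t ∈ range T, U t)
          + L 0 / (ε * T) :=
  fun T hT ↦ drift_plus_penalty_queue_bound_general hε hT (hL T) fun t _ ↦ hdrift t
end

section
/- Let Q : ℕ → ℝ with Q(0) ≥ 0, and for each t let A(t) and μ(t) be reals with 0 ≤ A(t) ≤ δ_A and 0 ≤ μ(t) ≤ δ_μ, where the queue evolves by Q(t+1) = max(Q(t) − μ(t), 0) + A(t). Then for every t ∈ ℕ and every n ∈ ℕ, |Q(t + n) − Q(t)| ≤ n · max(δ_A, δ_μ). -/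
section Backlog

variable {G : Type*} [AddCommGroup G] [LinearOrder G] [IsOrderedAddMonoid G] {Q A μ : ℕ → G}

theorem backlog_nonneg (hQ0 : 0 ≤ Q 0) (hA : ∀ t, 0 ≤ A t)
    (hQrec : ∀ t, Q (t + 1) = max (Q t - μ t) 0 + A t) : ∀ t, 0 ≤ Q t
  | 0 => hQ0
  | t + 1 => (hQrec t).symm ▸ add_nonneg (le_max_right _ _) (hA t)

theorem backlog_sub_le_sum_arrivals (hQ : ∀ t, 0 ≤ Q t) (hμ : ∀ t, 0 ≤ μ t)
    (hQrec : ∀ t, Q (t + 1) = max (Q t - μ t) 0 + A t) (t n : ℕ) :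
    Q (t + n) - Q t ≤ ∑ i ∈ Finset.range n, A (t + i) := by
  have slot_gain (s : ℕ) : Q (s + 1) - Q s ≤ A s := by
    have served_le : max (Q s - μ s) 0 ≤ Q s := max_le (sub_le_self _ (hμ s)) (hQ s)
    rw [hQrec, sub_le_iff_le_add']
    gcongr
  calc Q (t + n) - Q t
      = ∑ i ∈ Finset.range n, (Q (t + i + 1) - Q (t + i)) :=
        (Finset.sum_range_sub (fun i ↦ Q (t + i)) n).symm
    _ ≤ ∑ i ∈ Finset.range n, A (t + i) := Finset.sum_le_sum fun i _ ↦ slot_gain (t + i)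

theorem sub_backlog_le_sum_services (hA : ∀ t, 0 ≤ A t)
    (hQrec : ∀ t, Q (t + 1) = max (Q t - μ t) 0 + A t) (t n : ℕ) :
    Q t - Q (t + n) ≤ ∑ i ∈ Finset.range n, μ (t + i) := by
  have slot_loss (s : ℕ) : Q s - Q (s + 1) ≤ μ s := by
    rw [sub_le_comm, hQrec]
    exact le_add_of_le_of_nonneg (le_max_left _ _) (hA s)
  calc Q t - Q (t + n)
      = ∑ i ∈ Finset.range n, (Q (t + i) - Q (t + i + 1)) :=
        (Finset.sum_range_sub' (fun i ↦ Q (t + i)) n).symm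
    _ ≤ ∑ i ∈ Finset.range n, μ (t + i) := Finset.sum_le_sum fun i _ ↦ slot_loss (t + i)

theorem stale_queue_state_bound_general {δA δμ : G} (hQ0 : 0 ≤ Q 0)
    (hA : ∀ t, 0 ≤ A t ∧ A t ≤ δA) (hμ : ∀ t, 0 ≤ μ t ∧ μ t ≤ δμ)
    (hQrec : ∀ t, Q (t + 1) = max (Q t - μ t) 0 + A t) (t n : ℕ) :
    Q (t + n) - Q t ≤ n • δA ∧ Q t - Q (t + n) ≤ n • δμ := by
  have hA_nonneg (s : ℕ) : 0 ≤ A s := (hA s).1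
  have hQ : ∀ s, 0 ≤ Q s := backlog_nonneg hQ0 hA_nonneg hQrec
  have sum_arrivals_le : ∑ i ∈ Finset.range n, A (t + i) ≤ n • δA := by
    simpa only [Finset.card_range] using
      Finset.sum_le_card_nsmul (Finset.range n) _ δA fun i _ ↦ (hA (t + i)).2
  have sum_services_le : ∑ i ∈ Finset.range n, μ (t + i) ≤ n • δμ := by
    simpa only [Finset.card_range] using
      Finset.sum_le_card_nsmul (Finset.range n) _ δμ fun i _ ↦ (hμ (t + i)).2
  exact ⟨(backlog_sub_le_sum_arrivals hQ (fun s ↦ (hμ s).1) hQrec t n).trans sum_arrivals_le,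
    (sub_backlog_le_sum_services hA_nonneg hQrec t n).trans sum_services_le⟩

end Backlog

/-- Lemma 4: under per-slot arrival bound `δ_A` and service bound `δ_μ`, the
queue backlog drifts by at most `n · max(δ_A, δ_μ)` over `n` slots, bounding
the error of stale queue-state knowledge. -/
theorem stale_queue_state_bound
    (Q A μ : ℕ → ℝ) (δA δμ : ℝ)
    (hQ0 : 0 ≤ Q 0)
    (hA : ∀ t, 0 ≤ A t ∧ A t ≤ δA)
    (hμ : ∀ t, 0 ≤ μ t ∧ μ t ≤ δμ)
    (hQrec : ∀ t, Q (t + 1) = max (Q t - μ t) 0 + A t) :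
    ∀ t n : ℕ, |Q (t + n) - Q t| ≤ n * max δA δμ := by
  intro t n
  obtain ⟨gain_le, loss_le⟩ := stale_queue_state_bound_general hQ0 hA hμ hQrec t n
  rw [← nsmul_eq_mul, abs_sub_le_iff]
  exact ⟨gain_le.trans (nsmul_le_nsmul_right (le_max_left δA δμ) n),
    loss_le.trans (nsmul_le_nsmul_right (le_max_right δA δμ) n)⟩
end
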